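/- Assume D is induced by an r-skeleton in a compact Hausdorff space K. Then every subset of D which is closed in K is a Corson compact (with the subspace topology). -/

import Mathlib

/-!
Let `C` be closed and contained in the set `D` induced by the skeleton `(r s)`.

*Reduction to `D = K`.* Since the ranges of the `r s` are separable, a closing-off argument gives,
for each `A ⊆ D`, arbitrarily large `t` such that `r t` maps `closure A` into the closure of a
countable subset of `A`. For `A = C` this shows that the `s` with `r s '' C ⊆ C` are cofinal, so
they form a skeleton on `C` whose induced set is all of `C`. The same fact shows that `D` is
countably tight.

*Retractions along directed sets.* For a directed set `M` of indices let `core M` be the closure of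
`⋃ s ∈ M, range (r s)`. By compactness each `x` has a companion `y ∈ core M` with `r s y = r s x`
for all `s ∈ M`. It is unique: two points of `core M` already lie in `core S` for a countable
`S ⊆ M`, and `S` has an upper bound `t` such that `r t` fixes `core S` and is determined by the
`r s` with `s ∈ M`. Sending `x` to `y` is a continuous retraction `R M`. Letting `M` run through the
directed sets generated by arbitrary sets `A` of indices gives retractions `R A` that depend
finitarily on `A` and, by countable tightness, pointwise only on countable parts of `A`.

*Projectional resolution.* By induction on the cardinality of `A`, there are continuous functions
separating the points that `R A` separates, only countably many of which are nonzero at any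
given point. For finite `A` the range of `R A` is metrizable. For infinite `A`, well-order `A` in
its least order type and take the differences `f ∘ R A_{≤ i} - f ∘ R A_{< i}` with `f` from the
family of `A_{≤ i}`; each `x` has only countably many `i` with `R A_{≤ i} x ≠ R A_{< i} x`. When
`A` is the set of all indices, `R A` is the identity, and evaluation at the functions found embeds
the space into a `Σ`-product.
-/

open Filter Topology TopologicalSpace Set

universe u v

/-- A retractional skeleton in a topological space `K`: a family `r s : C(K, K)` of continuous
retractions indexed by an up-directed (nonempty) partially ordered set `Γ` such that
(i) each `r s` has metrizable range and the net `(r s x)` converges to `x`;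
(ii) `s ≤ t` implies `r s ∘ r t = r t ∘ r s = r s`;
(iii) each strictly increasing sequence has a supremum `t` and `r t x = lim_n r (f n) x`. -/
structure RetractionalSkeleton (K : Type u) [TopologicalSpace K] : Type (u + 1) where
  Γ : Type u
  [po : PartialOrder Γ]
  [ne : Nonempty Γ]
  directed : ∀ s t : Γ, ∃ w, s ≤ w ∧ t ≤ w
  r : Γ → C(K, K)
  isRetraction : ∀ s, ∀ x : K, r s (r s x) = r s x
  metrizable : ∀ s, MetrizableSpace ↥(Set.range (r s))
  tendsto_id : ∀ x : K, Tendsto (fun s => r s x) atTop (𝓝 x)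
  comp_eq_of_le : ∀ s t : Γ, s ≤ t → ∀ x : K, r s (r t x) = r s x ∧ r t (r s x) = r s x
  sup_seq : ∀ f : ℕ → Γ, StrictMono f → ∃ t : Γ, IsLUB (Set.range f) t ∧
    ∀ x : K, Tendsto (fun n => r (f n) x) atTop (𝓝 (r t x))

/-- The set `D(𝔰) = ⋃ s, r s [K]` induced by a retractional skeleton. -/
def RetractionalSkeleton.inducedSet {K : Type u} [TopologicalSpace K]
    (𝔰 : RetractionalSkeleton K) : Set K := ⋃ s, Set.range (𝔰.r s)

/-- `D` is induced by an r-skeleton in `K`. -/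
def IsInducedByRSkeleton {K : Type u} [TopologicalSpace K] (D : Set K) : Prop :=
  ∃ 𝔰 : RetractionalSkeleton K, 𝔰.inducedSet = D

/-- `K` has a retractional skeleton. -/
def HasRetractionalSkeleton (K : Type u) [TopologicalSpace K] : Prop :=
  Nonempty (RetractionalSkeleton K)

/-- `K` is a Corson compact space: it is homeomorphic to a compact subset of
`Σ(Γ) = {x ∈ ℝ^Γ : x γ ≠ 0 for at most countably many γ}` for some set `Γ`. -/
def IsCorsonCompact (K : Type u) [TopologicalSpace K] : Prop :=
  ∃ (Γ : Type u) (A : Set (Γ → ℝ)), IsCompact A ∧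
    (∀ x ∈ A, {γ | x γ ≠ 0}.Countable) ∧ Nonempty (K ≃ₜ ↥A)

section Preliminaries

lemma exists_countable_subset_image_eq {α β : Type*} {f : α → β} {s : Set α} {t : Set β}
    (ht : t.Countable) (hts : t ⊆ f '' s) : ∃ u ⊆ s, u.Countable ∧ f '' u = t := by
  obtain ⟨u, hus, hinj, rfl⟩ := SurjOn.exists_subset_injOn_image_eq hts
  exact ⟨u, hus, countable_of_injective_of_countable_image hinj ht, rfl⟩

lemma exists_monotone_seq_of_countable {α : Type*} [Preorder α] {M S : Set α} (hne : M.Nonempty)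
    (hM : DirectedOn (· ≤ ·) M) (hSM : S ⊆ M) (hS : S.Countable) :
    ∃ f : ℕ → α, Monotone f ∧ (∀ n, f n ∈ M) ∧ ∀ s ∈ S, ∃ n, s ≤ f n := by
  obtain ⟨m, hm⟩ := hne
  obtain ⟨e, he⟩ := (hS.insert m).exists_eq_range (insert_nonempty m S)
  have heM : ∀ n, e n ∈ M := fun n =>
    insert_subset hm hSM (he ▸ mem_range_self n)
  choose w hwM hle_left hle_right using hM
  let f : ℕ → M := fun n =>
    Nat.rec ⟨e 0, heM 0⟩ (fun n p => ⟨w p p.2 (e (n + 1)) (heM _), hwM _ _ _ _⟩) n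
  have hef : ∀ n, e n ≤ (f n).1 := by
    intro n
    cases n with
    | zero => exact le_rfl
    | succ n => exact hle_right _ (f n).2 _ (heM (n + 1))
  refine ⟨fun n => (f n).1, monotone_nat_of_le_succ fun n => hle_left _ (f n).2 _ (heM (n + 1)),
    fun n => (f n).2, fun s hs => ?_⟩
  obtain ⟨n, rfl⟩ : s ∈ range e := he ▸ mem_insert_of_mem m hs
  exact ⟨n, hef n⟩

lemma exists_monotone_finset_bound (α : Type*) [Preorder α] [IsDirectedOrder α] [Nonempty α] :
    ∃ g : Finset α → α, Monotone g ∧ ∀ F, ∀ a ∈ F, a ≤ g F := by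
  classical
  choose b hb using fun F : Finset α => F.exists_le
  let H : ∀ F : Finset α, (∀ E ⊂ F, α) → α := fun F p =>
    b (F ∪ F.ssubsets.attach.image fun E => p E.1 (Finset.mem_ssubsets.1 E.2))
  let g : Finset α → α := Finset.strongInduction H
  have hg : ∀ F, g F = b (F ∪ F.ssubsets.attach.image fun E => g E.1) := fun F =>
    Finset.strongInduction_eq H F
  refine ⟨g, fun E F hEF => ?_, fun F a ha => hg F ▸ hb _ a (Finset.mem_union_left _ ha)⟩
  obtain rfl | hlt := eq_or_ssubset_of_subset (show E ⊆ F from hEF)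
  · rfl
  · rw [hg F]
    exact hb _ _ <| Finset.mem_union_right _ <| Finset.mem_image.2
      ⟨⟨E, Finset.mem_ssubsets.2 hlt⟩, Finset.mem_attach _ _, rfl⟩

lemma countable_of_forall_isLowerSet {W : Type*} [PartialOrder W] [WellFoundedLT W] {S : Set W}
    (h : ∀ J, IsLowerSet J → ∃ T ⊆ J, T.Countable ∧ S ∩ J ⊆ lowerClosure T) : S.Countable := by
  have of_initial : ∀ J, IsLowerSet J → (∀ j ∈ J, (S ∩ Iic j).Countable) → (S ∩ J).Countable := by
    intro J hJ hc
    obtain ⟨T, hTJ, hT, hsub⟩ := h J hJ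
    refine (hT.biUnion fun t ht => hc t (hTJ ht)).mono fun k hk => ?_
    obtain ⟨t, ht, hkt⟩ := hsub hk
    exact mem_biUnion ht ⟨hk.1, hkt⟩
  have initial : ∀ j, (S ∩ Iic j).Countable := by
    intro j
    induction j using WellFoundedLT.induction with
    | ind j ih =>
      refine ((of_initial (Iio j) (isLowerSet_Iio j) ih).insert j).mono ?_
      rintro k ⟨hkS, hkj⟩
      exact (eq_or_lt_of_le hkj).imp_right fun hlt => ⟨hkS, hlt⟩
  simpa using of_initial univ isLowerSet_univ fun j _ => initial j

lemma exists_countable_image_closure_subset {X Y : Type*} [TopologicalSpace X] [CompactSpace X]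
    [TopologicalSpace Y] [MetrizableSpace Y] {p : X → Y} (hp : Continuous p) (A : Set X) :
    ∃ B ⊆ A, B.Countable ∧ p '' closure A ⊆ p '' closure B := by
  have hsep : IsSeparable (p '' A) := (isCompact_range hp).isSeparable.mono (image_subset_range p A)
  obtain ⟨E, hEA, hE, hAE⟩ := hsep.exists_countable_dense_subset
  obtain ⟨B, hBA, hB, rfl⟩ := exists_countable_subset_image_eq hE hEA
  refine ⟨B, hBA, hB, ?_⟩
  calc p '' closure A ⊆ closure (p '' A) := image_closure_subset_closure_image hp
    _ ⊆ closure (p '' B) := closure_minimal hAE isClosed_closure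
    _ = p '' closure B :=
      (image_closure_of_isCompact isClosed_closure.isCompact hp.continuousOn).symm

lemma metrizableSpace_range_restrict {X Y : Type*} [TopologicalSpace Y] {f : X → Y}
    [MetrizableSpace (range f)] {s : Set X} {t : Set Y} (h : MapsTo f s t) :
    MetrizableSpace (range (h.restrict f s t)) := by
  let j : range (h.restrict f s t) → range f := fun y =>
    ⟨y.1.1, y.2.elim fun x hx => ⟨x.1, congrArg Subtype.val hx⟩⟩
  have hval : IsEmbedding fun y : range (h.restrict f s t) => (y.1 : Y) :=
    IsEmbedding.subtypeVal.comp IsEmbedding.subtypeVal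
  have hj : IsEmbedding j :=
    IsEmbedding.of_comp (hval.continuous.subtype_mk _) continuous_subtype_val hval
  exact hj.metrizableSpace

lemma continuous_of_isClosed_graph {X Y : Type*} [TopologicalSpace X] [TopologicalSpace Y]
    [CompactSpace Y] {f : X → Y} (hf : IsClosed {p : X × Y | p.2 = f p.1}) : Continuous f := by
  refine continuous_iff_isClosed.2 fun S hS => ?_
  have himage : f ⁻¹' S = Prod.fst '' ({p : X × Y | p.2 = f p.1} ∩ Prod.snd ⁻¹' S) := by
    ext x
    simp
  exact himage ▸ isClosedMap_fst_of_compactSpace _ (hf.inter (hS.preimage continuous_snd))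

end Preliminaries

/-- There is a family of continuous real functions on `X`, only countably many of which are nonzero
at each point, that separates any two points separated by `p`. A compact space with this property
for `p = id` embeds into a `Σ`-product. -/
def PointCountablySeparated {X Y : Type*} [TopologicalSpace X] (p : X → Y) : Prop :=
  ∃ F : Set C(X, ℝ), (∀ x, {f ∈ F | f x ≠ 0}.Countable) ∧ ∀ x y, p x ≠ p y → ∃ f ∈ F, f x ≠ f y

namespace PointCountablySeparated

variable {X Y Z : Type*} [TopologicalSpace X]

lemma of_isSeparable_range [TopologicalSpace Y] [MetrizableSpace Y] {p : X → Y} (hp : Continuous p)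
    (hsep : IsSeparable (range p)) : PointCountablySeparated p := by
  let _ := metrizableSpaceMetric Y
  obtain ⟨E, -, hE, hpE⟩ := hsep.exists_countable_dense_subset
  let distTo : Y → C(X, ℝ) := fun e => ⟨fun x => dist (p x) e, hp.dist continuous_const⟩
  refine ⟨distTo '' E, fun x => (hE.image distTo).mono (sep_subset _ _), fun x y hxy => ?_⟩
  by_contra! heq
  have hdist : EqOn (fun e => dist (p x) e) (fun e => dist (p y) e) (closure E) :=
    EqOn.closure (fun e he => heq _ (mem_image_of_mem distTo he)) (by fun_prop) (by fun_prop)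
  exact hxy (dist_eq_zero.1 ((hdist (hpE (mem_range_self y))).trans (dist_self _)))

lemma of_imp {p : X → Y} {q : X → Z} (hp : PointCountablySeparated p)
    (h : ∀ x y, p x = p y → q x = q y) : PointCountablySeparated q := by
  obtain ⟨F, hF, hsep⟩ := hp
  exact ⟨F, hF, fun x y hxy => hsep x y (mt (h x y) hxy)⟩

lemma of_differences {I : Type*} {b : X → Y} {q : X → Z} {P Q : I → C(X, X)}
    (hb : PointCountablySeparated b) (hP : ∀ i, PointCountablySeparated (P i))
    (hidem : ∀ i x, P i (P i x) = P i x) (hdiff : ∀ x, {i | P i x ≠ Q i x}.Countable)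
    (hq : ∀ x y, b x = b y → q x ≠ q y → ∃ i, P i x ≠ P i y ∧ Q i x = Q i y) :
    PointCountablySeparated q := by
  obtain ⟨F, hF, hFsep⟩ := hb
  choose G hG hGsep using hP
  let δ : I → C(X, ℝ) → C(X, ℝ) := fun i f => f.comp (P i) - f.comp (Q i)
  refine ⟨F ∪ ⋃ i, δ i '' G i, fun x => ?_, fun x y hxy => ?_⟩
  · have hδ : (⋃ i ∈ {i | P i x ≠ Q i x},
        δ i '' ({f ∈ G i | f (P i x) ≠ 0} ∪ {f ∈ G i | f (Q i x) ≠ 0})).Countable :=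
      (hdiff x).biUnion fun i _ => ((hG i _).union (hG i _)).image _
    refine ((hF x).union hδ).mono ?_
    rintro f ⟨hf | hf, hfx⟩
    · exact Or.inl ⟨hf, hfx⟩
    obtain ⟨i, f, hfG, rfl⟩ := mem_iUnion.1 hf
    have hne : f (P i x) ≠ f (Q i x) := sub_ne_zero.1 hfx
    refine Or.inr (mem_biUnion (x := i) (fun h => hne (congrArg f h)) (mem_image_of_mem _ ?_))
    by_cases h0 : f (P i x) = 0
    · exact Or.inr ⟨hfG, fun hQ => hne (h0.trans hQ.symm)⟩
    · exact Or.inl ⟨hfG, h0⟩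
  · by_cases hbxy : b x = b y
    · obtain ⟨i, hPi, hQi⟩ := hq x y hbxy hxy
      obtain ⟨f, hf, hfxy⟩ := hGsep i (P i x) (P i y) (by rwa [hidem, hidem])
      refine ⟨δ i f, Or.inr (mem_iUnion.2 ⟨i, mem_image_of_mem _ hf⟩), fun heq => hfxy ?_⟩
      change f (P i x) - f (Q i x) = f (P i y) - f (Q i y) at heq
      rwa [hQi, sub_left_inj] at heq
    · obtain ⟨f, hf, hfxy⟩ := hFsep x y hbxy
      exact ⟨f, Or.inl hf, hfxy⟩

lemma isCorsonCompact {K : Type u} [TopologicalSpace K] [CompactSpace K]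
    (h : PointCountablySeparated (id : K → K)) : IsCorsonCompact K := by
  obtain ⟨F, hF, hsep⟩ := h
  let φ : K → F → ℝ := fun x f => f.1 x
  have hφ : Continuous φ := continuous_pi fun f => f.1.continuous
  have hinj : Function.Injective φ := by
    intro x y hxy
    by_contra hne
    obtain ⟨f, hf, hfxy⟩ := hsep x y hne
    exact hfxy (congrFun hxy ⟨f, hf⟩)
  refine ⟨F, range φ, isCompact_range hφ, ?_,
    ⟨(hφ.isClosedEmbedding hinj).isEmbedding.toHomeomorph⟩⟩
  rintro _ ⟨x, rfl⟩
  refine ((hF x).preimage Subtype.val_injective).mono ?_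
  exact fun f hf => ⟨f.2, hf⟩

end PointCountablySeparated

/-- A system of continuous maps `retr A : X → X` indexed by the subsets `A` of `ι`, consistent for
inclusions (so each `retr A` is idempotent), determined by the `retr F` with `F` finite, and such
that each `retr J x` depends only on a countable part of `J`. Along an increasing chain of sets `A`
it plays the role of a projectional resolution. -/
structure RetractionSystem (ι X : Type*) [TopologicalSpace X] where
  retr : Set ι → C(X, X)
  retr_retr_of_subset : ∀ {A B}, A ⊆ B → ∀ x, retr A (retr B x) = retr A x
  retr_eq_of_finset : ∀ {A x y}, (∀ F : Finset ι, ↑F ⊆ A → retr F x = retr F y) →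
    retr A x = retr A y
  exists_countable_support : ∀ J x, ∃ T ⊆ J, T.Countable ∧
    ∀ B, T ⊆ B → B ⊆ J → retr B x = retr J x

namespace RetractionSystem

variable {ι X : Type*} [TopologicalSpace X] (R : RetractionSystem ι X)

lemma retr_eq_of_subset {A B : Set ι} (hAB : A ⊆ B) {x y : X} (h : R.retr B x = R.retr B y) :
    R.retr A x = R.retr A y := by
  rw [← R.retr_retr_of_subset hAB, h, R.retr_retr_of_subset hAB]

section Chain

variable {W : Type*} [LinearOrder W] (e : W → ι)

lemma retr_image_eq_of_forall_Iic {J : Set W} {x y : X} (h0 : R.retr ∅ x = R.retr ∅ y)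
    (h : ∀ j ∈ J, R.retr (e '' Iic j) x = R.retr (e '' Iic j) y) :
    R.retr (e '' J) x = R.retr (e '' J) y := by
  classical
  refine R.retr_eq_of_finset fun F hF => ?_
  obtain ⟨G, hGJ, rfl⟩ := Finset.subset_set_image_iff.1 hF
  obtain rfl | hne := G.eq_empty_or_nonempty
  · simpa using h0
  · refine R.retr_eq_of_subset ?_ (h (G.max' hne) (hGJ (G.max'_mem hne)))
    rw [Finset.coe_image]
    exact image_mono fun i hi => G.le_max' i hi

variable [WellFoundedLT W]

lemma countable_retr_Iic_ne_retr_Iio (x : X) :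
    {i | R.retr (e '' Iic i) x ≠ R.retr (e '' Iio i) x}.Countable := by
  refine countable_of_forall_isLowerSet fun J hJ => ?_
  obtain ⟨_, hTeJ, hTe, hsupp⟩ := R.exists_countable_support (e '' J) x
  obtain ⟨T, hTJ, hT, rfl⟩ := exists_countable_subset_image_eq hTe hTeJ
  refine ⟨T, hTJ, hT, fun k ⟨hne, hkJ⟩ => ?_⟩
  by_contra hk
  have hlt : T ⊆ Iio k := fun t ht => not_le.1 fun hkt => hk ⟨t, ht, hkt⟩
  have hIic := hsupp _ (image_mono (hlt.trans Iio_subset_Iic_self)) (image_mono (hJ.Iic_subset hkJ))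
  have hIio := hsupp _ (image_mono hlt)
    (image_mono (Iio_subset_Iic_self.trans (hJ.Iic_subset hkJ)))
  exact hne (hIic.trans hIio.symm)

lemma pointCountablySeparated_retr_range (h0 : PointCountablySeparated (R.retr ∅))
    (h : ∀ i, PointCountablySeparated (R.retr (e '' Iic i))) :
    PointCountablySeparated (R.retr (range e)) := by
  refine .of_differences (Q := fun i => R.retr (e '' Iio i)) h0 h
    (fun i x => R.retr_retr_of_subset Subset.rfl x) (R.countable_retr_Iic_ne_retr_Iio e)
    fun x y hxy hne => ?_
  obtain ⟨i, hi, hmin⟩ :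
      ∃ i, Minimal (fun i => R.retr (e '' Iic i) x ≠ R.retr (e '' Iic i) y) i := by
    refine exists_minimal_of_wellFoundedLT _ ?_
    by_contra! heq
    exact hne (image_univ (f := e) ▸ R.retr_image_eq_of_forall_Iic e hxy fun i _ => heq i)
  refine ⟨i, hi, R.retr_image_eq_of_forall_Iic e hxy fun j hj => ?_⟩
  by_contra hj'
  exact (hmin hj' (le_of_lt hj)).not_gt hj

end Chain

open Cardinal in
theorem pointCountablySeparated_retr
    (hfin : ∀ A : Set ι, A.Finite → PointCountablySeparated (R.retr A)) (A : Set ι) :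
    PointCountablySeparated (R.retr A) := by
  induction hc : #A using WellFoundedLT.induction generalizing A with
  | ind c ih =>
    subst hc
    obtain hA | hA := A.finite_or_infinite
    · exact hfin A hA
    have : Infinite A := hA.to_subtype
    obtain ⟨_, _, hord⟩ := exists_ord_eq_type_lt A
    have hsmall : ∀ a : A, #(Subtype.val '' Iic a : Set ι) < #A := fun a =>
      mk_image_le.trans_lt (mk_Iic_lt a hord (aleph0_le_mk A))
    rw [← Subtype.range_val (s := A)]
    exact R.pointCountablySeparated_retr_range _ (hfin ∅ finite_empty)
      fun a => ih _ (hsmall a) _ rfl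

end RetractionSystem

attribute [local instance] RetractionalSkeleton.po RetractionalSkeleton.ne

namespace RetractionalSkeleton

section Basic

variable {K : Type u} [TopologicalSpace K] (𝔰 : RetractionalSkeleton K)

instance : IsDirectedOrder 𝔰.Γ := ⟨𝔰.directed⟩

lemma r_eq_self_of_le {s t : 𝔰.Γ} (h : s ≤ t) {x : K} (hx : 𝔰.r s x = x) : 𝔰.r t x = x := by
  simpa only [hx] using (𝔰.comp_eq_of_le s t h x).2

lemma r_eq_of_le {s t : 𝔰.Γ} (h : s ≤ t) {x y : K} (hxy : 𝔰.r t x = 𝔰.r t y) :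
    𝔰.r s x = 𝔰.r s y := by
  rw [← (𝔰.comp_eq_of_le s t h x).1, hxy, (𝔰.comp_eq_of_le s t h y).1]

lemma mem_inducedSet {x : K} : x ∈ 𝔰.inducedSet ↔ ∃ s, 𝔰.r s x = x := by
  simp only [inducedSet, mem_iUnion, mem_range]
  constructor
  · rintro ⟨s, y, rfl⟩
    exact ⟨s, 𝔰.isRetraction s y⟩
  · rintro ⟨s, hs⟩
    exact ⟨s, x, hs⟩

lemma r_eq_self_of_mem_closure [T2Space K] {s : 𝔰.Γ} {B : Set K} (hB : ∀ b ∈ B, 𝔰.r s b = b)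
    {x : K} (hx : x ∈ closure B) : 𝔰.r s x = x :=
  closure_minimal hB (isClosed_eq (𝔰.r s).continuous continuous_id) hx

lemma exists_ge_of_monotone [T2Space K] {f : ℕ → 𝔰.Γ} (hf : Monotone f) :
    ∃ t, (∀ n, f n ≤ t) ∧ ∀ x y, (∀ n, 𝔰.r (f n) x = 𝔰.r (f n) y) → 𝔰.r t x = 𝔰.r t y := by
  -- A weakly increasing sequence has a strictly increasing or a constant subsequence.
  obtain ⟨g, hg | hg⟩ := exists_increasing_or_nonincreasing_subseq (· < ·) f
  · obtain ⟨t, ht, hlim⟩ := 𝔰.sup_seq (f ∘ g) fun m n h => hg m n h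
    refine ⟨t, fun n => (hf g.strictMono.le_apply).trans (ht.1 ⟨n, rfl⟩), fun x y h => ?_⟩
    exact tendsto_nhds_unique (hlim x) ((hlim y).congr fun n => (h (g n)).symm)
  · refine ⟨f (g 0), fun n => ?_, fun x y h => h (g 0)⟩
    obtain rfl | hn := n.eq_zero_or_pos
    · exact hf (Nat.zero_le _)
    · have hconst : f (g 0) = f (g n) :=
        (hf (g.monotone (Nat.zero_le n))).eq_of_not_lt (hg 0 n hn)
      exact hconst ▸ hf g.strictMono.le_apply

lemma exists_ge_of_countable [T2Space K] {M S : Set 𝔰.Γ} (hne : M.Nonempty)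
    (hM : DirectedOn (· ≤ ·) M) (hSM : S ⊆ M) (hS : S.Countable) :
    ∃ t, (∀ s ∈ S, s ≤ t) ∧ ∀ x y, (∀ s ∈ M, 𝔰.r s x = 𝔰.r s y) → 𝔰.r t x = 𝔰.r t y := by
  obtain ⟨f, hf, hfM, hSf⟩ := exists_monotone_seq_of_countable hne hM hSM hS
  obtain ⟨t, hft, ht⟩ := 𝔰.exists_ge_of_monotone hf
  refine ⟨t, fun s hs => ?_, fun x y h => ht x y fun n => h _ (hfM n)⟩
  obtain ⟨n, hn⟩ := hSf s hs
  exact hn.trans (hft n)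

end Basic

section Compact

variable {K : Type u} [TopologicalSpace K] [CompactSpace K] (𝔰 : RetractionalSkeleton K)

lemma exists_countable_r_image_closure_subset (s : 𝔰.Γ) (A : Set K) :
    ∃ B ⊆ A, B.Countable ∧ 𝔰.r s '' closure A ⊆ 𝔰.r s '' closure B := by
  have := 𝔰.metrizable s
  obtain ⟨B, hBA, hB, h⟩ :=
    exists_countable_image_closure_subset (𝔰.r s).continuous.rangeFactorization A
  refine ⟨B, hBA, hB, ?_⟩
  simpa only [image_image, rangeFactorization_coe] using image_mono (f := Subtype.val) h

lemma pointCountablySeparated_r (s : 𝔰.Γ) : PointCountablySeparated (𝔰.r s) := by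
  have := 𝔰.metrizable s
  have hcont := (𝔰.r s).continuous.rangeFactorization
  exact (PointCountablySeparated.of_isSeparable_range hcont
    (isCompact_range hcont).isSeparable).of_imp fun x y h => congrArg Subtype.val h

variable [T2Space K]

lemma exists_mem_forall_r_eq {ι : Type*} [Nonempty ι] {f : ι → 𝔰.Γ} (hf : Directed (· ≤ ·) f)
    {L : Set K} (hL : IsClosed L) {x : K} (h : ∀ i, 𝔰.r (f i) x ∈ 𝔰.r (f i) '' L) :
    ∃ y ∈ L, ∀ i, 𝔰.r (f i) y = 𝔰.r (f i) x := by
  let Z : ι → Set K := fun i => L ∩ {y | 𝔰.r (f i) y = 𝔰.r (f i) x}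
  have hZ : ∀ i, IsClosed (Z i) := fun i =>
    hL.inter (isClosed_eq (𝔰.r (f i)).continuous continuous_const)
  have hdir : Directed (· ⊇ ·) Z := fun i j => by
    obtain ⟨k, hik, hjk⟩ := hf i j
    exact ⟨k, fun y hy => ⟨hy.1, 𝔰.r_eq_of_le hik hy.2⟩, fun y hy => ⟨hy.1, 𝔰.r_eq_of_le hjk hy.2⟩⟩
  obtain ⟨y, hy⟩ := IsCompact.nonempty_iInter_of_directed_nonempty_isCompact_isClosed Z hdir
    h (fun i => (hZ i).isCompact) hZ
  rw [mem_iInter] at hy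
  exact ⟨y, (hy (Classical.arbitrary ι)).1, fun i => (hy i).2⟩

end Compact

section Reflection

variable {K : Type u} [TopologicalSpace K] [CompactSpace K] [T2Space K]
  (𝔰 : RetractionalSkeleton K) {A : Set K}

lemma exists_ge_fixing_countable (hA : A ⊆ 𝔰.inducedSet) (s : 𝔰.Γ) :
    ∃ t ≥ s, ∃ B ⊆ A, B.Countable ∧ (∀ b ∈ B, 𝔰.r t b = b) ∧
      𝔰.r s '' closure A ⊆ 𝔰.r s '' closure B := by
  obtain ⟨B, hBA, hB, hAB⟩ := 𝔰.exists_countable_r_image_closure_subset s A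
  choose! q hq using fun b (hb : b ∈ B) => 𝔰.mem_inducedSet.1 (hA (hBA hb))
  obtain ⟨t, ht, -⟩ := 𝔰.exists_ge_of_countable univ_nonempty directedOn_univ
    (subset_univ _) ((hB.image q).insert s)
  exact ⟨t, ht s (mem_insert _ _), B, hBA, hB, fun b hb =>
    𝔰.r_eq_self_of_le (ht _ (mem_insert_of_mem _ (mem_image_of_mem q hb))) (hq b hb), hAB⟩

lemma exists_ge_mapsTo_closure_countable (hA : A ⊆ 𝔰.inducedSet) (s : 𝔰.Γ) :
    ∃ t ≥ s, ∃ B ⊆ A, B.Countable ∧ MapsTo (𝔰.r t) (closure A) (closure B) := by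
  choose up hle B hBA hB hfix hAB using 𝔰.exists_ge_fixing_countable hA
  let f : ℕ → 𝔰.Γ := fun n => up^[n] s
  have hsucc : ∀ n, f (n + 1) = up (f n) := fun n => Function.iterate_succ_apply' up n s
  have hf : Monotone f := monotone_nat_of_le_succ fun n => hsucc n ▸ hle (f n)
  obtain ⟨t, hft, ht⟩ := 𝔰.exists_ge_of_monotone hf
  refine ⟨t, hft 0, ⋃ n, B (f n), iUnion_subset fun n => hBA _, countable_iUnion fun n => hB _,
    fun x hx => ?_⟩
  obtain ⟨y, hy, hyx⟩ := 𝔰.exists_mem_forall_r_eq hf.directed_le isClosed_closure fun n =>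
    image_mono (closure_mono (subset_iUnion (fun n => B (f n)) n))
      (hAB (f n) (mem_image_of_mem _ hx))
  have hty : 𝔰.r t y = y := by
    refine 𝔰.r_eq_self_of_mem_closure (fun b hb => ?_) hy
    obtain ⟨n, hbn⟩ := mem_iUnion.1 hb
    exact 𝔰.r_eq_self_of_le (hsucc n ▸ hft (n + 1)) (hfix (f n) b hbn)
  rwa [← ht y x hyx, hty]

lemma exists_countable_mem_closure (hA : A ⊆ 𝔰.inducedSet) {x : K} (hx : x ∈ 𝔰.inducedSet)
    (hxA : x ∈ closure A) : ∃ B ⊆ A, B.Countable ∧ x ∈ closure B := by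
  obtain ⟨s, hs⟩ := 𝔰.mem_inducedSet.1 hx
  obtain ⟨t, hst, B, hBA, hB, hmaps⟩ := 𝔰.exists_ge_mapsTo_closure_countable hA s
  exact ⟨B, hBA, hB, 𝔰.r_eq_self_of_le hst hs ▸ hmaps hxA⟩

end Reflection

section Restrict

variable {K : Type u} [TopologicalSpace K] [CompactSpace K] [T2Space K]
  (𝔰 : RetractionalSkeleton K) {C : Set K}

lemma exists_ge_mapsTo (hC : IsClosed C) (hCD : C ⊆ 𝔰.inducedSet) (s : 𝔰.Γ) :
    ∃ t ≥ s, MapsTo (𝔰.r t) C C := by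
  obtain ⟨t, hst, B, hBC, -, hmaps⟩ := 𝔰.exists_ge_mapsTo_closure_countable hCD s
  exact ⟨t, hst, fun x hx => closure_minimal hBC hC (hmaps (subset_closure hx))⟩

/-- The skeleton induced on a closed subset `C` of the induced set: its indices are those `s`
with `r s '' C ⊆ C`. -/
def restrict (hC : IsClosed C) (hCD : C ⊆ 𝔰.inducedSet) : RetractionalSkeleton C where
  Γ := {s : 𝔰.Γ // MapsTo (𝔰.r s) C C}
  ne := by
    obtain ⟨t, -, ht⟩ := 𝔰.exists_ge_mapsTo hC hCD (Classical.arbitrary _)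
    exact ⟨⟨t, ht⟩⟩
  directed := by
    rintro ⟨s, hs⟩ ⟨t, ht⟩
    obtain ⟨w, hsw, htw⟩ := 𝔰.directed s t
    obtain ⟨w', hww', hw'⟩ := 𝔰.exists_ge_mapsTo hC hCD w
    exact ⟨⟨w', hw'⟩, hsw.trans hww', htw.trans hww'⟩
  r s := ⟨s.2.restrict _ _ _, (𝔰.r s.1).continuous.restrict s.2⟩
  isRetraction s x := Subtype.ext (𝔰.isRetraction s.1 x)
  metrizable s :=
    have := 𝔰.metrizable s.1
    metrizableSpace_range_restrict s.2
  tendsto_id x := by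
    have hcofinal : Tendsto (Subtype.val : {s // MapsTo (𝔰.r s) C C} → 𝔰.Γ) atTop atTop :=
      tendsto_atTop_atTop_of_monotone (fun _ _ h => h) fun s =>
        let ⟨t, hst, ht⟩ := 𝔰.exists_ge_mapsTo hC hCD s
        ⟨⟨t, ht⟩, hst⟩
    exact tendsto_subtype_rng.2 ((𝔰.tendsto_id x.1).comp hcofinal)
  comp_eq_of_le s t hst x :=
    (𝔰.comp_eq_of_le s.1 t.1 hst x).imp Subtype.ext Subtype.ext
  sup_seq f hf := by
    obtain ⟨t, ht, hlim⟩ := 𝔰.sup_seq (fun n => (f n).1) hf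
    have htC : MapsTo (𝔰.r t) C C := fun x hx =>
      hC.mem_of_tendsto (hlim x) (Eventually.of_forall fun n => (f n).2 hx)
    refine ⟨⟨t, htC⟩, ⟨?_, fun b hb => ht.2 ?_⟩, fun x => tendsto_subtype_rng.2 (hlim x)⟩
    · rintro _ ⟨n, rfl⟩
      exact ht.1 ⟨n, rfl⟩
    · rintro _ ⟨n, rfl⟩
      exact hb ⟨n, rfl⟩

lemma restrict_inducedSet (hC : IsClosed C) (hCD : C ⊆ 𝔰.inducedSet) :
    (𝔰.restrict hC hCD).inducedSet = univ := by
  refine eq_univ_of_forall fun x => ?_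
  obtain ⟨s, hs⟩ := 𝔰.mem_inducedSet.1 (hCD x.2)
  obtain ⟨t, hst, ht⟩ := 𝔰.exists_ge_mapsTo hC hCD s
  exact (mem_inducedSet _).2 ⟨⟨t, ht⟩, Subtype.ext (𝔰.r_eq_self_of_le hst hs)⟩

end Restrict

section Core

variable {K : Type u} [TopologicalSpace K] (𝔰 : RetractionalSkeleton K)

/-- The closure of the union of the ranges of the retractions with index in `M`; for directed `M`
it is the range of the limit of these retractions. -/
def core (M : Set 𝔰.Γ) : Set K := closure (⋃ s ∈ M, range (𝔰.r s))

lemma core_mono {M N : Set 𝔰.Γ} (h : M ⊆ N) : 𝔰.core M ⊆ 𝔰.core N :=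
  closure_mono (biUnion_subset_biUnion_left h)

lemma r_mem_core {M : Set 𝔰.Γ} {s : 𝔰.Γ} (hs : s ∈ M) (x : K) : 𝔰.r s x ∈ 𝔰.core M :=
  subset_closure (mem_biUnion hs (mem_range_self x))

variable [T2Space K]

lemma r_eq_self_of_mem_core {S : Set 𝔰.Γ} {t : 𝔰.Γ} (ht : ∀ s ∈ S, s ≤ t) {x : K}
    (hx : x ∈ 𝔰.core S) : 𝔰.r t x = x := by
  refine 𝔰.r_eq_self_of_mem_closure (fun y hy => ?_) hx
  obtain ⟨s, hs, z, rfl⟩ := mem_iUnion₂.1 hy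
  exact (𝔰.comp_eq_of_le s t (ht s hs) z).2

variable [CompactSpace K]

lemma exists_countable_mem_core {M : Set 𝔰.Γ} {x : K} (hx : x ∈ 𝔰.core M)
    (hxD : x ∈ 𝔰.inducedSet) : ∃ S ⊆ M, S.Countable ∧ x ∈ 𝔰.core S := by
  obtain ⟨B, hBM, hB, hxB⟩ := 𝔰.exists_countable_mem_closure
    (iUnion₂_subset fun s _ => subset_iUnion (fun s => range (𝔰.r s)) s) hxD hx
  simp only [subset_def, mem_iUnion, exists_prop] at hBM
  choose! s hsM hs using hBM
  refine ⟨s '' B, image_subset_iff.2 hsM, hB.image s, closure_mono (fun b hb => ?_) hxB⟩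
  exact mem_biUnion (mem_image_of_mem s hb) (hs b hb)

lemma eq_of_mem_core {M : Set 𝔰.Γ} (hne : M.Nonempty) (hM : DirectedOn (· ≤ ·) M) {x y : K}
    (hx : x ∈ 𝔰.core M) (hxD : x ∈ 𝔰.inducedSet) (hy : y ∈ 𝔰.core M) (hyD : y ∈ 𝔰.inducedSet)
    (h : ∀ s ∈ M, 𝔰.r s x = 𝔰.r s y) : x = y := by
  obtain ⟨S, hSM, hS, hxS⟩ := 𝔰.exists_countable_mem_core hx hxD
  obtain ⟨T, hTM, hT, hyT⟩ := 𝔰.exists_countable_mem_core hy hyD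
  obtain ⟨t, ht, heq⟩ := 𝔰.exists_ge_of_countable hne hM (union_subset hSM hTM) (hS.union hT)
  calc x = 𝔰.r t x := (𝔰.r_eq_self_of_mem_core (fun s hs => ht s (Or.inl hs)) hxS).symm
    _ = 𝔰.r t y := heq x y h
    _ = y := 𝔰.r_eq_self_of_mem_core (fun s hs => ht s (Or.inr hs)) hyT

theorem exists_retraction_onto_core {M : Set 𝔰.Γ} (hne : M.Nonempty)
    (hM : DirectedOn (· ≤ ·) M) (hMD : 𝔰.core M ⊆ 𝔰.inducedSet) :
    ∃ R : C(K, K), ∀ x, R x ∈ 𝔰.core M ∧ ∀ s ∈ M, 𝔰.r s (R x) = 𝔰.r s x := by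
  have : Nonempty M := hne.to_subtype
  have hex : ∀ x, ∃ y ∈ 𝔰.core M, ∀ s : M, 𝔰.r s y = 𝔰.r s x := fun x =>
    𝔰.exists_mem_forall_r_eq hM.directed_val isClosed_closure fun s =>
      ⟨𝔰.r s x, 𝔰.r_mem_core s.2 x, 𝔰.isRetraction s x⟩
  choose R hRM hR using hex
  have hgraph : {p : K × K | p.2 = R p.1} =
      {p | p.2 ∈ 𝔰.core M ∧ ∀ s : M, 𝔰.r s p.2 = 𝔰.r s p.1} := by
    ext ⟨x, y⟩
    refine ⟨fun (hy : y = R x) => hy ▸ ⟨hRM x, hR x⟩, fun ⟨hy, hyx⟩ => ?_⟩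
    exact 𝔰.eq_of_mem_core hne hM hy (hMD hy) (hRM x) (hMD (hRM x))
      fun s hs => (hyx ⟨s, hs⟩).trans (hR x ⟨s, hs⟩).symm
  have hclosed : IsClosed {p : K × K | p.2 = R p.1} := by
    simp only [hgraph, ofPred_and, ofPred_forall]
    exact (isClosed_closure.preimage continuous_snd).inter
      (isClosed_iInter fun s => isClosed_eq (by fun_prop) (by fun_prop))
  exact ⟨⟨R, continuous_of_isClosed_graph hclosed⟩, fun x => ⟨hRM x, fun s hs => hR x ⟨s, hs⟩⟩⟩

end Core

section Hull

variable {K : Type u} [TopologicalSpace K] (𝔰 : RetractionalSkeleton K)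

/-- A monotone choice of an upper bound for each finite set of indices. -/
noncomputable def bound : Finset 𝔰.Γ → 𝔰.Γ := (exists_monotone_finset_bound 𝔰.Γ).choose

lemma bound_mono : Monotone 𝔰.bound := (exists_monotone_finset_bound 𝔰.Γ).choose_spec.1

lemma le_bound {F : Finset 𝔰.Γ} {s : 𝔰.Γ} (hs : s ∈ F) : s ≤ 𝔰.bound F :=
  (exists_monotone_finset_bound 𝔰.Γ).choose_spec.2 F s hs

/-- The directed set of indices generated by `A`, which consists of the chosen upper bounds of the
finite subsets of `A`. It depends finitarily and monotonically on `A`, but need not contain `A`. -/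
def hull (A : Set 𝔰.Γ) : Set 𝔰.Γ := 𝔰.bound '' {F | ↑F ⊆ A}

lemma hull_mono {A B : Set 𝔰.Γ} (h : A ⊆ B) : 𝔰.hull A ⊆ 𝔰.hull B :=
  image_mono fun _ hF => Subset.trans hF h

lemma bound_mem_hull {F : Finset 𝔰.Γ} {A : Set 𝔰.Γ} (h : ↑F ⊆ A) : 𝔰.bound F ∈ 𝔰.hull A :=
  mem_image_of_mem _ h

lemma hull_nonempty (A : Set 𝔰.Γ) : (𝔰.hull A).Nonempty :=
  ⟨_, 𝔰.bound_mem_hull (F := ∅) (by simp)⟩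

lemma directedOn_hull (A : Set 𝔰.Γ) : DirectedOn (· ≤ ·) (𝔰.hull A) := by
  classical
  rintro _ ⟨E, hE, rfl⟩ _ ⟨F, hF, rfl⟩
  exact ⟨𝔰.bound (E ∪ F), 𝔰.bound_mem_hull (by simpa using And.intro hE hF),
    𝔰.bound_mono Finset.subset_union_left, 𝔰.bound_mono Finset.subset_union_right⟩

lemma le_bound_of_mem_hull {F : Finset 𝔰.Γ} {s : 𝔰.Γ} (hs : s ∈ 𝔰.hull F) : s ≤ 𝔰.bound F := by
  obtain ⟨E, hE, rfl⟩ := hs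
  exact 𝔰.bound_mono (Finset.coe_subset.1 hE)

lemma exists_countable_subset_hull {A S : Set 𝔰.Γ} (hS : S.Countable) (hSA : S ⊆ 𝔰.hull A) :
    ∃ T ⊆ A, T.Countable ∧ S ⊆ 𝔰.hull T := by
  obtain ⟨𝓕, h𝓕A, h𝓕, rfl⟩ := exists_countable_subset_image_eq hS hSA
  exact ⟨⋃ F ∈ 𝓕, ↑F, iUnion₂_subset h𝓕A, h𝓕.biUnion fun F _ => F.countable_toSet,
    image_mono fun F hF => subset_biUnion_of_mem (u := fun F : Finset 𝔰.Γ => (F : Set 𝔰.Γ)) hF⟩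

end Hull

section FullInducedSet

variable {K : Type u} [TopologicalSpace K] [CompactSpace K] [T2Space K]
  {𝔰 : RetractionalSkeleton K} (hD : 𝔰.inducedSet = univ)

/-- The limit of the retractions `r s` with `s ∈ hull A`, obtained without limits as the map `R`
into `core (hull A)` that satisfies `r s ∘ R = r s` for these `s`. -/
noncomputable def hullRetraction (A : Set 𝔰.Γ) : C(K, K) :=
  (𝔰.exists_retraction_onto_core (𝔰.hull_nonempty A) (𝔰.directedOn_hull A)
    (hD ▸ subset_univ _)).choose

lemma hullRetraction_mem_core (A : Set 𝔰.Γ) (x : K) :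
    hullRetraction hD A x ∈ 𝔰.core (𝔰.hull A) :=
  ((𝔰.exists_retraction_onto_core (𝔰.hull_nonempty A) (𝔰.directedOn_hull A)
    (hD ▸ subset_univ _)).choose_spec x).1

lemma r_hullRetraction {A : Set 𝔰.Γ} {s : 𝔰.Γ} (hs : s ∈ 𝔰.hull A) (x : K) :
    𝔰.r s (hullRetraction hD A x) = 𝔰.r s x :=
  ((𝔰.exists_retraction_onto_core (𝔰.hull_nonempty A) (𝔰.directedOn_hull A)
    (hD ▸ subset_univ _)).choose_spec x).2 s hs

lemma hullRetraction_eq_of_mem_core {A : Set 𝔰.Γ} {x y : K} (hy : y ∈ 𝔰.core (𝔰.hull A))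
    (h : ∀ s ∈ 𝔰.hull A, 𝔰.r s y = 𝔰.r s x) : hullRetraction hD A x = y :=
  𝔰.eq_of_mem_core (𝔰.hull_nonempty A) (𝔰.directedOn_hull A)
    (hullRetraction_mem_core hD A x) (hD ▸ mem_univ _) hy (hD ▸ mem_univ _)
    fun s hs => (r_hullRetraction hD hs x).trans (h s hs).symm

lemma hullRetraction_eq_of_forall_r_eq {A : Set 𝔰.Γ} {x y : K}
    (h : ∀ s ∈ 𝔰.hull A, 𝔰.r s x = 𝔰.r s y) : hullRetraction hD A x = hullRetraction hD A y :=
  hullRetraction_eq_of_mem_core hD (hullRetraction_mem_core hD A y)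
    fun s hs => (r_hullRetraction hD hs y).trans (h s hs).symm

lemma hullRetraction_coe_finset (F : Finset 𝔰.Γ) (x : K) :
    hullRetraction hD (F : Set 𝔰.Γ) x = 𝔰.r (𝔰.bound F) x :=
  hullRetraction_eq_of_mem_core hD (𝔰.r_mem_core (𝔰.bound_mem_hull Subset.rfl) x)
    fun s hs => (𝔰.comp_eq_of_le s _ (𝔰.le_bound_of_mem_hull hs) x).1

lemma hullRetraction_univ (x : K) : hullRetraction hD univ x = x := by
  obtain ⟨s, hs⟩ := 𝔰.mem_inducedSet.1 (hD ▸ mem_univ x)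
  have hfix : 𝔰.r (𝔰.bound {s}) x = x :=
    𝔰.r_eq_self_of_le (𝔰.le_bound (Finset.mem_singleton_self s)) hs
  have hx : x ∈ 𝔰.core (𝔰.hull univ) := hfix ▸ 𝔰.r_mem_core (𝔰.bound_mem_hull (subset_univ _)) x
  exact hullRetraction_eq_of_mem_core hD hx fun _ _ => rfl

lemma exists_countable_hullRetraction_eq (J : Set 𝔰.Γ) (x : K) :
    ∃ T ⊆ J, T.Countable ∧ ∀ B, T ⊆ B → B ⊆ J → hullRetraction hD B x = hullRetraction hD J x := by
  obtain ⟨S, hSJ, hS, hxS⟩ :=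
    𝔰.exists_countable_mem_core (hullRetraction_mem_core hD J x) (hD ▸ mem_univ _)
  obtain ⟨T, hTJ, hT, hST⟩ := 𝔰.exists_countable_subset_hull hS hSJ
  refine ⟨T, hTJ, hT, fun B hTB hBJ => hullRetraction_eq_of_mem_core hD ?_ fun s hs => ?_⟩
  · exact 𝔰.core_mono (hST.trans (𝔰.hull_mono hTB)) hxS
  · exact r_hullRetraction hD (𝔰.hull_mono hBJ hs) x

/-- The retractions `hullRetraction hD A` as a retraction system indexed by the sets `A` of indices
of the skeleton. -/
noncomputable def retractionSystem : RetractionSystem 𝔰.Γ K where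
  retr := hullRetraction hD
  retr_retr_of_subset hAB x := hullRetraction_eq_of_forall_r_eq hD
    fun _ hs => r_hullRetraction hD (𝔰.hull_mono hAB hs) x
  retr_eq_of_finset {A x y} h := hullRetraction_eq_of_forall_r_eq hD <| by
    rintro _ ⟨F, hFA, rfl⟩
    simpa only [hullRetraction_coe_finset] using h F hFA
  exists_countable_support := exists_countable_hullRetraction_eq hD

end FullInducedSet

theorem isCorsonCompact_of_inducedSet_eq_univ {K : Type u} [TopologicalSpace K] [CompactSpace K]
    [T2Space K] {𝔰 : RetractionalSkeleton K} (hD : 𝔰.inducedSet = univ) : IsCorsonCompact K := by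
  have hfin : ∀ A : Set 𝔰.Γ, A.Finite → PointCountablySeparated (hullRetraction hD A) := by
    intro A hA
    lift A to Finset 𝔰.Γ using hA
    refine (𝔰.pointCountablySeparated_r (𝔰.bound A)).of_imp fun x y h => ?_
    simpa only [hullRetraction_coe_finset] using h
  have huniv := (retractionSystem hD).pointCountablySeparated_retr hfin univ
  refine (huniv.of_imp fun x y h => ?_).isCorsonCompact
  simpa only [retractionSystem, hullRetraction_univ, id_eq] using h

end RetractionalSkeleton

/-- If `D` is induced by an r-skeleton in a compact Hausdorff space `K`, then every subset
of `D` which is closed in `K` is Corson compact. -/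
theorem corson_of_closed_subset_induced (K : Type u) [TopologicalSpace K] [CompactSpace K]
    [T2Space K] (D : Set K) (hD : IsInducedByRSkeleton D)
    (C : Set K) (hCD : C ⊆ D) (hC : IsClosed C) :
    IsCorsonCompact ↥C := by
  obtain ⟨𝔰, rfl⟩ := hD
  have : CompactSpace C := isCompact_iff_compactSpace.1 hC.isCompact
  have hfull : (𝔰.restrict hC hCD).inducedSet = univ := 𝔰.restrict_inducedSet hC hCD
  exact RetractionalSkeleton.isCorsonCompact_of_inducedSet_eq_univ hfull
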